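/- Let X be a locally compact Hausdorff space, ζ a quasi-integral on X, and O ⊆ X an open subset with compact closure. Set λ_O = sup{ζ(g) : g ∈ C_c(X), supp(g) ⊆ O, g ≤ 1}, and let Ô = O ∪ {∞} be the one-point compactification of O, so that extension by zero identifies C_c(O) with a subspace of C(Ô). Then there exists a unique quasi-integral ζ̂ on the compact Hausdorff space Ô such that ζ̂ agrees with ζ on C_c(O) (via extension by zero) and ζ̂(g + c·1) = ζ̂(g) + c·λ_O for every g ∈ C(Ô) and every constant c ∈ ℝ. -/

import Mathlib

/-!
Let `π : X → Ô` be the collapse map, the identity on `O` and `∞` off `O`. It is continuous because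
compact subsets of `O` are closed in `X`. For `g ∈ C(Ô)` the function `g ∘ π - g ∞` is thus
continuous on `X` and supported in the compact set `closure O`, so that
`ζ̂ g = ζ (g ∘ π - g ∞) + g ∞ * λ_O` makes sense. Agreement with `ζ` on `C_c(O)`, the
constant-shift identity and quasi-linearity are immediate from this formula.

The substantial point is monotonicity, which amounts to `u ≤ v + c → ζ u ≤ ζ v + c * λ_O` for
`c ≥ 0` and functions `u, v` vanishing off `O` (`QuasiIntegral.le_add_mul_lambdaO`). If `u` and `v`
have compact support in `O`, take a Urysohn function `χ` supported in `O` and equal to `1` on both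
supports. Then `u ≤ v + c χ`, and quasi-linearity gives `ζ (v + c χ) = ζ v + c * ζ χ` although `v`
and `χ` need not lie in a common singly generated subspace (`QuasiIntegral.map_add_cutoff`): one
splits `v` into its positive and negative parts. The general case follows by approximating `u` by
`T_ε ∘ u`, where the soft threshold `T_ε` is monotone, `1`-Lipschitz and vanishes on `[-ε, ε]`, so
that `T_ε ∘ u` has compact support in `O`. The Lipschitz bound for `ζ̂`, with constant `λ_O`, is a
consequence of monotonicity and the shift identity.

Uniqueness follows from the same approximation, since any candidate is determined on the functions
with compact support in `O`, is Lipschitz, and obeys the shift identity.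
-/

open Set Topology
open scoped CompactlySupported

noncomputable section

/-- The family `𝒜(X)` of admissible sets: compact sets together with
open sets with compact closure. -/
def Admissible (X : Type*) [TopologicalSpace X] : Set (Set X) :=
  {A | IsCompact A ∨ (IsOpen A ∧ IsCompact (closure A))}

/-- A quasi-integral on `X`: a monotone, locally Lipschitz (w.r.t. the uniform norm,
on functions with support in a fixed compact set) functional on `C_c(X, ℝ)` which is
linear on every subspace of the form `{φ ∘ f | φ ∈ C(ℝ), φ 0 = 0}`. -/
structure QuasiIntegral (X : Type*) [TopologicalSpace X] where
  toFun : C_c(X, ℝ) → ℝ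
  mono' : ∀ f g : C_c(X, ℝ), (∀ x, f x ≤ g x) → toFun f ≤ toFun g
  lipschitz' : ∀ K : Set X, IsCompact K → ∃ N : ℝ, 0 ≤ N ∧
    ∀ f g : C_c(X, ℝ), tsupport ⇑f ⊆ K → tsupport ⇑g ⊆ K →
      |toFun f - toFun g| ≤ N * ⨆ x, |f x - g x|
  quasilin_add' : ∀ (f : C_c(X, ℝ)) (φ ψ : ℝ → ℝ), Continuous φ → Continuous ψ →
    φ 0 = 0 → ψ 0 = 0 → ∀ gφ gψ gs : C_c(X, ℝ),
    (∀ x, gφ x = φ (f x)) → (∀ x, gψ x = ψ (f x)) →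
    (∀ x, gs x = φ (f x) + ψ (f x)) → toFun gs = toFun gφ + toFun gψ
  quasilin_smul' : ∀ (f : C_c(X, ℝ)) (φ : ℝ → ℝ), Continuous φ → φ 0 = 0 →
    ∀ (c : ℝ) (gφ gc : C_c(X, ℝ)),
    (∀ x, gφ x = φ (f x)) → (∀ x, gc x = c * φ (f x)) → toFun gc = c * toFun gφ

/-- A topological measure on `X` (normalized to vanish on non-admissible sets):
a nonnegative, additive, monotone, regular set function on `𝒜(X)`. -/
structure TopMeasure (X : Type*) [TopologicalSpace X] where
  toFun : Set X → ℝ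
  zero_of_not_mem' : ∀ A : Set X, A ∉ Admissible X → toFun A = 0
  nonneg' : ∀ A : Set X, 0 ≤ toFun A
  additive' : ∀ A A' : Set X, A ∈ Admissible X → A' ∈ Admissible X →
    A ∪ A' ∈ Admissible X → Disjoint A A' → toFun (A ∪ A') = toFun A + toFun A'
  mono' : ∀ A A' : Set X, A ∈ Admissible X → A' ∈ Admissible X → A ⊆ A' →
    toFun A ≤ toFun A'
  outer_reg' : ∀ K : Set X, IsCompact K →
    toFun K = sInf (toFun '' {O : Set X | IsOpen O ∧ IsCompact (closure O) ∧ K ⊆ O})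
  inner_reg' : ∀ O : Set X, IsOpen O → IsCompact (closure O) →
    toFun O = sSup (toFun '' {K : Set X | IsCompact K ∧ K ⊆ O})

variable {X : Type*} [TopologicalSpace X]

/-- `τ_ζ(K) = inf {ζ(f) | f ∈ C_c(X), f ≥ 1_K}`, for `K` compact. -/
def tauCompact (ζ : QuasiIntegral X) (K : Set X) : ℝ :=
  sInf (ζ.toFun '' {f : C_c(X, ℝ) | ∀ x, K.indicator (fun _ => (1 : ℝ)) x ≤ f x})

/-- `τ_ζ(O) = sup {ζ(f) | f ∈ C_c(X), f ≤ 1_O}`, for `O` open with compact closure. -/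
def tauOpen (ζ : QuasiIntegral X) (O : Set X) : ℝ :=
  sSup (ζ.toFun '' {f : C_c(X, ℝ) | ∀ x, f x ≤ O.indicator (fun _ => (1 : ℝ)) x})

open scoped Classical in
/-- The induced set function `τ_ζ` of a quasi-integral `ζ`. -/
def inducedSetFun (ζ : QuasiIntegral X) (A : Set X) : ℝ :=
  if IsCompact A then tauCompact ζ A
  else if IsOpen A ∧ IsCompact (closure A) then tauOpen ζ A
  else 0

/-- `λ_O = sup {ζ(g) | g ∈ C_c(X), supp g ⊆ O, g ≤ 1}`. -/
def lambdaO (ζ : QuasiIntegral X) (O : Set X) : ℝ :=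
  sSup (ζ.toFun '' {f : C_c(X, ℝ) | tsupport ⇑f ⊆ O ∧ ∀ x, f x ≤ 1})

/-! ### Soft thresholding on the real line -/

/-- The soft threshold `T_ε t = t - clamp t`, where `clamp` is the projection onto `[-ε, ε]`. -/
def softThreshold (ε : ℝ) : C(ℝ, ℝ) := ⟨fun t => t - max (-ε) (min ε t), by fun_prop⟩

lemma softThreshold_zero {ε : ℝ} (hε : 0 < ε) : softThreshold ε 0 = 0 := by
  simp [softThreshold, hε.le]

lemma softThreshold_eq_zero {ε t : ℝ} (ht : |t| ≤ ε) : softThreshold ε t = 0 := by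
  obtain ⟨h1, h2⟩ := abs_le.mp ht
  simp [softThreshold, h1, h2]

lemma abs_sub_softThreshold_le {ε : ℝ} (hε : 0 < ε) (t : ℝ) : |t - softThreshold ε t| ≤ ε := by
  simp only [softThreshold, ContinuousMap.coe_mk, sub_sub_cancel]
  exact abs_le.mpr ⟨le_max_left _ _, max_le (by linarith) (min_le_left _ _)⟩

/-- `T_ε` is both monotone and `1`-Lipschitz. -/
lemma softThreshold_le_add {ε s t c : ℝ} (hc : 0 ≤ c) (h : s ≤ t + c) :
    softThreshold ε s ≤ softThreshold ε t + c := by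
  simp only [softThreshold, ContinuousMap.coe_mk]
  grind

lemma le_of_forall_pos_le_add_mul {a b N : ℝ} (hN : 0 ≤ N) (h : ∀ ε > 0, a ≤ b + N * ε) :
    a ≤ b := by
  refine le_of_forall_pos_le_add fun ε hε => (h (ε / (N + 1)) (by positivity)).trans ?_
  have h1 : N * (ε / (N + 1)) ≤ ε := by
    rw [mul_div_assoc', div_le_iff₀ (by positivity)]
    nlinarith
  linarith

/-! ### Quasi-linearity with cutoffs, approximation by soft thresholds -/

namespace QuasiIntegral

lemma ext_toFun {η θ : QuasiIntegral X} (h : ∀ f, η.toFun f = θ.toFun f) : η = θ := by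
  cases η
  cases θ
  congr
  exact funext h

lemma map_smul (ζ : QuasiIntegral X) (c : ℝ) (f : C_c(X, ℝ)) :
    ζ.toFun (c • f) = c * ζ.toFun f :=
  ζ.quasilin_smul' f id continuous_id rfl c f (c • f) (fun _ => rfl) (fun _ => by simp)

lemma map_zero (ζ : QuasiIntegral X) : ζ.toFun 0 = 0 := by
  simpa using ζ.map_smul 0 0

/-- A quasi-integral is additive on `v + c χ` when `χ` is a cutoff equal to `1` where `v ≠ 0`.
The positive part `v⁺` and `c χ - v⁻` are functions of `v + c χ` (its parts above and below the
level `c`), while `c χ` and `v⁻` are functions of `v⁻ + c χ`. -/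
lemma map_add_cutoff (ζ : QuasiIntegral X) (v χ : C_c(X, ℝ)) (hχ : ∀ x, χ x ≤ 1)
    (hv : ∀ x, v x ≠ 0 → χ x = 1) {c : ℝ} (hc : 0 < c) :
    ζ.toFun (v + c • χ) = ζ.toFun v + c * ζ.toFun χ := by
  have hcχ : ∀ x, c * χ x ≤ c := fun x => by nlinarith [hχ x]
  have hx : ∀ x, v x = 0 ∨ c * χ x = c := fun x => by
    by_cases h : v x = 0
    · exact .inl h
    · exact .inr (by rw [hv x h, mul_one])
  let vp : C_c(X, ℝ) := v.compLeft ⟨fun t => max t 0, by fun_prop⟩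
  let vm : C_c(X, ℝ) := v.compLeft ⟨fun t => max (-t) 0, by fun_prop⟩
  have hvp : ∀ x, vp x = max (v x) 0 := fun x =>
    CompactlySupportedContinuousMap.compLeft_apply (by simp) v x
  have hvm : ∀ x, vm x = max (-v x) 0 := fun x =>
    CompactlySupportedContinuousMap.compLeft_apply (by simp) v x
  have hneg : ζ.toFun ((-1 : ℝ) • vm) = -ζ.toFun vm := by rw [map_smul]; ring
  have h1 : ζ.toFun v = ζ.toFun vp + ζ.toFun ((-1 : ℝ) • vm) := by
    refine ζ.quasilin_add' v (fun t => max t 0) (fun t => -max (-t) 0) (by fun_prop)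
      (by fun_prop) (by simp) (by simp) _ _ _ hvp (fun x => ?_) (fun x => ?_)
    · simp [hvm]
    · grind
  have h2 : ζ.toFun (v + c • χ) = ζ.toFun vp + ζ.toFun (c • χ + (-1 : ℝ) • vm) := by
    refine ζ.quasilin_add' (v + c • χ) (fun t => max (t - c) 0) (fun t => min t c)
      (by fun_prop) (by fun_prop) (by simp [hc.le]) (by simp [hc.le]) _ _ _ (fun x => ?_)
      (fun x => ?_) (fun x => ?_)
    all_goals
      have := hcχ x
      have := hx x
      simp only [CompactlySupportedContinuousMap.coe_add, CompactlySupportedContinuousMap.coe_smul,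
        Pi.add_apply, Pi.smul_apply, smul_eq_mul, hvp, hvm]
      grind
  have h3 : ζ.toFun (c • χ + (-1 : ℝ) • vm)
      = ζ.toFun (c • χ) + ζ.toFun ((-1 : ℝ) • vm) := by
    refine ζ.quasilin_add' (vm + c • χ) (fun t => min t c) (fun t => -max (t - c) 0)
      (by fun_prop) (by fun_prop) (by simp [hc.le]) (by simp [hc.le]) _ _ _ (fun x => ?_)
      (fun x => ?_) (fun x => ?_)
    all_goals
      have := hcχ x
      have := hx x
      simp only [CompactlySupportedContinuousMap.coe_add, CompactlySupportedContinuousMap.coe_smul,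
        Pi.add_apply, Pi.smul_apply, smul_eq_mul, hvm]
      grind
  rw [h2, h3, h1, map_smul]
  ring

lemma exists_abs_sub_softThreshold_le (ζ : QuasiIntegral X) (u : C_c(X, ℝ)) :
    ∃ N : ℝ, 0 ≤ N ∧ ∀ ε > 0,
      |ζ.toFun u - ζ.toFun (u.compLeft (softThreshold ε))| ≤ N * ε := by
  obtain ⟨N, hN, h⟩ := ζ.lipschitz' (tsupport u) u.hasCompactSupport
  refine ⟨N, hN, fun ε hε => (h u _ subset_rfl ?_).trans ?_⟩
  · refine closure_mono fun x hx hu => hx ?_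
    rw [CompactlySupportedContinuousMap.compLeft_apply (softThreshold_zero hε), hu,
      softThreshold_zero hε]
  · refine mul_le_mul_of_nonneg_left (Real.iSup_le (fun x => ?_) hε.le) hN
    rw [CompactlySupportedContinuousMap.compLeft_apply (softThreshold_zero hε)]
    exact abs_sub_softThreshold_le hε _

end QuasiIntegral

lemma tsupport_softThreshold_subset {u : C_c(X, ℝ)} {O : Set X} (hu : ∀ x ∉ O, u x = 0)
    {ε : ℝ} (hε : 0 < ε) : tsupport (u.compLeft (softThreshold ε)) ⊆ O := by
  have hcl : IsClosed {x | ε ≤ |u x|} :=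
    isClosed_le continuous_const (map_continuous u).abs
  refine (closure_minimal (fun x hx => ?_) hcl).trans fun x hx => ?_
  · by_contra hlt
    refine hx ?_
    rw [CompactlySupportedContinuousMap.compLeft_apply (softThreshold_zero hε)]
    exact softThreshold_eq_zero (not_le.mp hlt).le
  · by_contra hxO
    have : ε ≤ |u x| := hx
    rw [hu x hxO, abs_zero] at this
    linarith

/-! ### The Lipschitz estimate with constant `λ_O` -/

section LambdaO

variable [T2Space X] [LocallyCompactSpace X] (ζ : QuasiIntegral X) {O : Set X}

/-- Needed for the real supremum defining `lambdaO` not to take its junk value. -/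
lemma bddAbove_lambdaO (hOc : IsCompact (closure O)) :
    BddAbove (ζ.toFun '' {f : C_c(X, ℝ) | tsupport ⇑f ⊆ O ∧ ∀ x, f x ≤ 1}) := by
  obtain ⟨U, hU1, hUc, -, hU⟩ :=
    exists_continuousMap_one_of_isCompact_subset_isOpen hOc isOpen_univ (subset_univ _)
  refine ⟨ζ.toFun ⟨U, hUc⟩, ?_⟩
  rintro _ ⟨f, ⟨hfO, hf1⟩, rfl⟩
  refine ζ.mono' _ _ fun x => ?_
  by_cases hx : x ∈ O
  · have : U x = 1 := hU1 (subset_closure hx)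
    exact (hf1 x).trans this.ge
  · rw [image_eq_zero_of_notMem_tsupport fun h => hx (hfO h)]
    exact (hU x).1

lemma lambdaO_nonneg (hOc : IsCompact (closure O)) : 0 ≤ lambdaO ζ O :=
  le_csSup (bddAbove_lambdaO ζ hOc) ⟨0, by simp [tsupport], ζ.map_zero⟩

lemma QuasiIntegral.le_add_mul_lambdaO_of_tsupport (hO : IsOpen O) (hOc : IsCompact (closure O))
    {u v : C_c(X, ℝ)} (hu : tsupport u ⊆ O) (hv : tsupport v ⊆ O) {c : ℝ} (hc : 0 ≤ c)
    (h : ∀ x, u x ≤ v x + c) : ζ.toFun u ≤ ζ.toFun v + c * lambdaO ζ O := by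
  rcases hc.eq_or_lt with rfl | hc
  · simpa using ζ.mono' u v (by simpa using h)
  obtain ⟨χ, hχ1, hχc, hχO, hχ⟩ := exists_continuousMap_one_of_isCompact_subset_isOpen
    (IsCompact.union u.hasCompactSupport v.hasCompactSupport) hO (union_subset hu hv)
  let χ' : C_c(X, ℝ) := ⟨χ, hχc⟩
  have hχ_le : ζ.toFun χ' ≤ lambdaO ζ O :=
    le_csSup (bddAbove_lambdaO ζ hOc) ⟨χ', ⟨hχO, fun x => (hχ x).2⟩, rfl⟩
  have h1 : ζ.toFun u ≤ ζ.toFun (v + c • χ') := by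
    refine ζ.mono' _ _ fun x => ?_
    change u x ≤ v x + c * χ x
    by_cases hx : x ∈ tsupport u ∪ tsupport v
    · have : χ x = 1 := hχ1 hx
      simpa [this] using h x
    · rw [mem_union, not_or] at hx
      rw [image_eq_zero_of_notMem_tsupport hx.1, image_eq_zero_of_notMem_tsupport hx.2, zero_add]
      exact mul_nonneg hc.le (hχ x).1
  rw [ζ.map_add_cutoff v χ' (fun x => (hχ x).2)
    (fun x hx => hχ1 (.inr (subset_tsupport _ hx))) hc] at h1
  nlinarith

/-- The one-sided Lipschitz estimate with constant `λ_O`, for functions that vanish off `O` but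
whose support need not be contained in `O`. -/
lemma QuasiIntegral.le_add_mul_lambdaO (hO : IsOpen O) (hOc : IsCompact (closure O))
    {u v : C_c(X, ℝ)} (hu : ∀ x ∉ O, u x = 0) (hv : ∀ x ∉ O, v x = 0) {c : ℝ} (hc : 0 ≤ c)
    (h : ∀ x, u x ≤ v x + c) : ζ.toFun u ≤ ζ.toFun v + c * lambdaO ζ O := by
  obtain ⟨N, hN, hNu⟩ := ζ.exists_abs_sub_softThreshold_le u
  obtain ⟨M, hM, hMv⟩ := ζ.exists_abs_sub_softThreshold_le v
  refine le_of_forall_pos_le_add_mul (add_nonneg hN hM) fun ε hε => ?_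
  have h1 := ζ.le_add_mul_lambdaO_of_tsupport hO hOc (tsupport_softThreshold_subset hu hε)
    (tsupport_softThreshold_subset hv hε) hc fun x => by
      simp only [CompactlySupportedContinuousMap.compLeft_apply (softThreshold_zero hε)]
      exact softThreshold_le_add hc (h x)
  have h2 := abs_le.mp (hNu ε hε)
  have h3 := abs_le.mp (hMv ε hε)
  linarith [h2.2, h3.1]

end LambdaO

/-! ### The collapse map and the extended quasi-integral -/

section Collapse

open scoped OnePoint

open scoped Classical in
/-- The collapse map `X → Ô`, the identity on `O` and `∞` off `O`. -/
def collapseMap (O : Set X) (x : X) : OnePoint ↥O :=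
  if h : x ∈ O then ((⟨x, h⟩ : ↥O) : OnePoint ↥O) else ∞

omit [TopologicalSpace X] in
lemma collapseMap_of_mem {O : Set X} {x : X} (h : x ∈ O) :
    collapseMap O x = ((⟨x, h⟩ : ↥O) : OnePoint ↥O) := dif_pos h

omit [TopologicalSpace X] in
lemma collapseMap_coe {O : Set X} (x : ↥O) : collapseMap O x = (x : OnePoint ↥O) :=
  collapseMap_of_mem x.2

omit [TopologicalSpace X] in
lemma collapseMap_of_notMem {O : Set X} {x : X} (h : x ∉ O) : collapseMap O x = ∞ := dif_neg h

lemma continuous_collapseMap [T2Space X] {O : Set X} (hO : IsOpen O) : Continuous (collapseMap O) := by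
  refine ⟨fun U hU => ?_⟩
  by_cases hmem : ∞ ∈ U
  ·
    -- The complement of the preimage is the image in `X` of a compact subset of `O`.
    have hK := ((OnePoint.isOpen_iff_of_mem' hmem).mp hU).1.image continuous_subtype_val
    convert hK.isClosed.isOpen_compl using 1
    ext x
    by_cases hx : x ∈ O
    · simp [collapseMap_of_mem hx, hx]
    · simp [collapseMap_of_notMem hx, hx, hmem]
  · have hV := hO.isOpenMap_subtype_val _ ((OnePoint.isOpen_iff_of_notMem hmem).mp hU)
    convert hV using 1
    ext x
    by_cases hx : x ∈ O
    · simp [collapseMap_of_mem hx, hx]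
    · simp [collapseMap_of_notMem hx, hx, hmem]

/-- The function `g - g ∞` on `Ô`, restricted to `O` and extended by zero to `X`. -/
def extendSubInfty [T2Space X] {O : Set X} (hO : IsOpen O) (hOc : IsCompact (closure O))
    (g : C_c(OnePoint ↥O, ℝ)) : C_c(X, ℝ) where
  toFun x := g (collapseMap O x) - g ∞
  continuous_toFun := ((map_continuous g).comp (continuous_collapseMap hO)).sub continuous_const
  hasCompactSupport' := by
    refine HasCompactSupport.intro hOc fun x hx => ?_
    rw [collapseMap_of_notMem fun h => hx (subset_closure h), sub_self]

section Extension

variable [T2Space X] {O : Set X} (hO : IsOpen O) (hOc : IsCompact (closure O))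

lemma extendSubInfty_apply (g : C_c(OnePoint ↥O, ℝ)) (x : X) :
    extendSubInfty hO hOc g x = g (collapseMap O x) - g ∞ := rfl

lemma extendSubInfty_of_notMem (g : C_c(OnePoint ↥O, ℝ)) (x : X) (hx : x ∉ O) :
    extendSubInfty hO hOc g x = 0 := by
  rw [extendSubInfty_apply, collapseMap_of_notMem hx, sub_self]

variable [LocallyCompactSpace X] (ζ : QuasiIntegral X)

/-- The value `ζ̂ g = ζ (g ∘ π - g ∞) + g ∞ * λ_O`. -/
def hatFun (g : C_c(OnePoint ↥O, ℝ)) : ℝ :=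
  ζ.toFun (extendSubInfty hO hOc g) + g ∞ * lambdaO ζ O

/-- Monotonicity of `ζ̂` and its Lipschitz estimate in one statement. The hypothesis gives
`f - f ∞ ≤ (g - g ∞) + (g ∞ - f ∞ + c)`, where the constant is nonnegative by evaluation
at `∞`. -/
lemma hatFun_le_add {f g : C_c(OnePoint ↥O, ℝ)} {c : ℝ} (h : ∀ y, f y ≤ g y + c) :
    hatFun hO hOc ζ f ≤ hatFun hO hOc ζ g + c * lambdaO ζ O := by
  have hc : 0 ≤ g ∞ - f ∞ + c := by linarith [h ∞]
  have key := ζ.le_add_mul_lambdaO hO hOc (extendSubInfty_of_notMem hO hOc f)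
    (extendSubInfty_of_notMem hO hOc g) hc fun x => by
      rw [extendSubInfty_apply, extendSubInfty_apply]
      linarith [h (collapseMap O x)]
  simp only [hatFun]
  linarith

/-- The quasi-integral `ζ̂` on `Ô`. -/
def hatIntegral : QuasiIntegral (OnePoint ↥O) where
  toFun := hatFun hO hOc ζ
  mono' f g h := by
    simpa using hatFun_le_add hO hOc ζ (c := 0) (by simpa using h)
  lipschitz' K _ := by
    refine ⟨lambdaO ζ O, lambdaO_nonneg ζ hOc, fun f g _ _ => ?_⟩
    have hb : BddAbove (range fun y => |f y - g y|) :=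
      (isCompact_range ((map_continuous f).sub (map_continuous g)).abs).bddAbove
    have hs : ∀ y, |f y - g y| ≤ ⨆ y, |f y - g y| := fun y => le_ciSup hb y
    have h1 := hatFun_le_add hO hOc ζ (f := f) (g := g) (c := ⨆ y, |f y - g y|) fun y => by
      linarith [(abs_le.mp (hs y)).2]
    have h2 := hatFun_le_add hO hOc ζ (f := g) (g := f) (c := ⨆ y, |f y - g y|) fun y => by
      linarith [(abs_le.mp (hs y)).1]
    exact abs_le.mpr ⟨by linarith, by linarith⟩
  quasilin_add' f φ ψ hφ hψ _ _ gφ gψ gs h1 h2 h3 := by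
    -- `φ ∘ f - φ (f ∞)` is a function of `f - f ∞` that vanishes at `0`.
    have := ζ.quasilin_add' (extendSubInfty hO hOc f) (fun t => φ (t + f ∞) - φ (f ∞))
      (fun t => ψ (t + f ∞) - ψ (f ∞)) (by fun_prop) (by fun_prop) (by simp) (by simp)
      (extendSubInfty hO hOc gφ) (extendSubInfty hO hOc gψ) (extendSubInfty hO hOc gs)
      (fun x => by simp [extendSubInfty_apply, h1]) (fun x => by simp [extendSubInfty_apply, h2])
      (fun x => by simp [extendSubInfty_apply, h3]; ring)
    simp only [hatFun, this, h1, h2, h3]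
    ring
  quasilin_smul' f φ hφ _ c gφ gc h1 h2 := by
    have := ζ.quasilin_smul' (extendSubInfty hO hOc f) (fun t => φ (t + f ∞) - φ (f ∞))
      (by fun_prop) (by simp) c (extendSubInfty hO hOc gφ) (extendSubInfty hO hOc gc)
      (fun x => by simp [extendSubInfty_apply, h1])
      (fun x => by simp [extendSubInfty_apply, h2]; ring)
    simp only [hatFun, this, h1, h2]
    ring

end Extension

end Collapse

/-! ### Existence and uniqueness -/

open scoped OnePoint in
/-- a quasi-integral `ζ` on `X` induces, for every open `O ⊆ X` with
compact closure, a unique quasi-integral `ζ̂` on the one-point compactification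
`Ô = O ∪ {∞}` which agrees with `ζ` on `C_c(O)` (via extension by zero) and
satisfies `ζ̂(g + c⋅1) = ζ̂(g) + c⋅λ_O`. -/
theorem quasiIntegral_onePoint_compactification {X : Type*} [TopologicalSpace X]
    [T2Space X] [LocallyCompactSpace X] (ζ : QuasiIntegral X) (O : Set X)
    (hO : IsOpen O) (hOc : IsCompact (closure O)) :
    ∃! ζhat : QuasiIntegral (OnePoint ↥O),
      (∀ (f : C_c(X, ℝ)) (g : C_c(OnePoint ↥O, ℝ)), tsupport ⇑f ⊆ O →
        g ∞ = 0 → (∀ x : ↥O, g (x : OnePoint ↥O) = f (x : X)) →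
        ζhat.toFun g = ζ.toFun f) ∧
      (∀ (g gc : C_c(OnePoint ↥O, ℝ)) (c : ℝ), (∀ y, gc y = g y + c) →
        ζhat.toFun gc = ζhat.toFun g + c * lambdaO ζ O) := by
  refine ⟨hatIntegral hO hOc ζ, ⟨fun f g hf hg h => ?_, fun g gc c h => ?_⟩, ?_⟩
  · have hE : extendSubInfty hO hOc g = f := by
      ext x
      by_cases hx : x ∈ O
      · rw [extendSubInfty_apply, collapseMap_of_mem hx, h, hg, sub_zero]
      · rw [extendSubInfty_of_notMem hO hOc g x hx,
          image_eq_zero_of_notMem_tsupport fun h => hx (hf h)]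
    change hatFun hO hOc ζ g = _
    rw [hatFun, hE, hg, zero_mul, add_zero]
  · have hE : extendSubInfty hO hOc gc = extendSubInfty hO hOc g := by
      ext x
      simp [extendSubInfty_apply, h]
    change hatFun hO hOc ζ gc = hatFun hO hOc ζ g + _
    rw [hatFun, hatFun, hE, h]
    ring
  · rintro η ⟨hη, hηc⟩
    refine QuasiIntegral.ext_toFun fun g => ?_
    -- Normalise `g` to vanish at `∞`.
    let k : C_c(OnePoint ↥O, ℝ) :=
      ⟨⟨fun y => g y - g ∞, (map_continuous g).sub continuous_const⟩,
        HasCompactSupport.of_compactSpace _⟩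
    have hk : ∀ y, g y = k y + g ∞ := fun y => (sub_add_cancel (g y) (g ∞)).symm
    have hk0 : k ∞ = 0 := sub_self _
    obtain ⟨N, hN, hNk⟩ := η.exists_abs_sub_softThreshold_le k
    obtain ⟨M, hM, hMk⟩ := ζ.exists_abs_sub_softThreshold_le (extendSubInfty hO hOc k)
    have hη_eq : η.toFun k = ζ.toFun (extendSubInfty hO hOc k) := by
      have hclose : ∀ ε > 0,
          |η.toFun k - ζ.toFun (extendSubInfty hO hOc k)| ≤ 0 + (N + M) * ε := fun ε hε => by
        have h := hη ((extendSubInfty hO hOc k).compLeft (softThreshold ε))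
          (k.compLeft (softThreshold ε))
          (tsupport_softThreshold_subset (extendSubInfty_of_notMem hO hOc k) hε)
          (by rw [CompactlySupportedContinuousMap.compLeft_apply (softThreshold_zero hε), hk0,
                softThreshold_zero hε])
          (fun x => by
            simp only [CompactlySupportedContinuousMap.compLeft_apply (softThreshold_zero hε),
              extendSubInfty_apply, collapseMap_coe, hk0, sub_zero])
        have h1 := abs_le.mp (hNk ε hε)
        have h2 := abs_le.mp (hMk ε hε)
        exact abs_le.mpr ⟨by linarith [h1.1, h2.2], by linarith [h1.2, h2.1]⟩
      have := le_of_forall_pos_le_add_mul (add_nonneg hN hM) hclose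
      exact sub_eq_zero.mp (abs_nonpos_iff.mp this)
    have hE : extendSubInfty hO hOc k = extendSubInfty hO hOc g := by
      ext x
      rw [extendSubInfty_apply, extendSubInfty_apply, hk0, hk (collapseMap O x)]
      ring
    rw [hηc k g (g ∞) hk, hη_eq, hE]
    rfl

end
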